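/- (Amblard–Michel conservation law.) Let X^m and Y^m be jointly distributed random variables taking values in finite sets. Then I(X^m; Y^m) = I(D^1 ∘ X^m → Y^m) + I(D^1 ∘ Y^m → X^m) + I_inst(X^m, Y^m), i.e., mutual information decomposes into the two one-step delayed directed information terms plus the instantaneous information. -/

import Mathlib

open MeasureTheory Finset

variable {Ω : Type*} [MeasurableSpace Ω]

/-- Shannon entropy of a random variable `W` with values in a finite set:
`H(W) = -∑ w, P(W = w) log P(W = w)`. -/
noncomputable def entropy (μ : Measure Ω) {α : Type*} [Fintype α] (W : Ω → α) : ℝ :=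
  -∑ w : α, (μ (W ⁻¹' {w})).toReal * Real.log (μ (W ⁻¹' {w})).toReal

/-- Conditional entropy `H(W | V) = H(W, V) - H(V)`. -/
noncomputable def condEntropy (μ : Measure Ω) {α β : Type*} [Fintype α] [Fintype β]
    (W : Ω → α) (V : Ω → β) : ℝ :=
  entropy μ (fun ω => (W ω, V ω)) - entropy μ V

/-- Conditional mutual information `I(A; B | C) = H(A|C) + H(B|C) - H(A,B|C)`. -/
noncomputable def condMI (μ : Measure Ω) {α β γ : Type*} [Fintype α] [Fintype β] [Fintype γ]
    (A : Ω → α) (B : Ω → β) (C : Ω → γ) : ℝ :=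
  condEntropy μ A C + condEntropy μ B C - condEntropy μ (fun ω => (A ω, B ω)) C

/-- Mutual information `I(A; B) = H(A) + H(B) - H(A,B)`. -/
noncomputable def mutualInfo (μ : Measure Ω) {α β : Type*} [Fintype α] [Fintype β]
    (A : Ω → α) (B : Ω → β) : ℝ :=
  entropy μ A + entropy μ B - entropy μ (fun ω => (A ω, B ω))

/-- The prefix `X^i = (X_1, …, X_i)` of the sequence `X` (1-based indexing);
`X^0` is the empty (constant) random variable. -/
def pref {𝒳 : Type*} (X : ℕ → Ω → 𝒳) (i : ℕ) : Ω → (Fin i → 𝒳) :=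
  fun ω t => X (t.1 + 1) ω

/-- The InfoMat entry `I_{i,j} = I(X_i; Y_j | X^{i-1}, Y^{j-1})`. -/
noncomputable def infoMat (μ : Measure Ω) {𝒳 𝒴 : Type*} [Fintype 𝒳] [Fintype 𝒴]
    (X : ℕ → Ω → 𝒳) (Y : ℕ → Ω → 𝒴) (i j : ℕ) : ℝ :=
  condMI μ (X i) (Y j) (fun ω => (pref X (i - 1) ω, pref Y (j - 1) ω))

/-- Directed information `I(X^m → Y^m) = ∑_{i=1}^m I(X^i; Y_i | Y^{i-1})`. -/
noncomputable def directedInfo (μ : Measure Ω) {𝒳 𝒴 : Type*} [Fintype 𝒳] [Fintype 𝒴]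
    (m : ℕ) (X : ℕ → Ω → 𝒳) (Y : ℕ → Ω → 𝒴) : ℝ :=
  ∑ i ∈ Finset.Icc 1 m, condMI μ (pref X i) (Y i) (pref Y (i - 1))

/-- `k`-step delayed directed information
`I(D^k ∘ X^m → Y^m) = ∑_{i=k+1}^m I(X^{i-k}; Y_i | Y^{i-1})`. -/
noncomputable def delayedDI (μ : Measure Ω) {𝒳 𝒴 : Type*} [Fintype 𝒳] [Fintype 𝒴]
    (m k : ℕ) (X : ℕ → Ω → 𝒳) (Y : ℕ → Ω → 𝒴) : ℝ :=
  ∑ i ∈ Finset.Icc (k + 1) m, condMI μ (pref X (i - k)) (Y i) (pref Y (i - 1))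

/-- Instantaneous information `I_inst(X^m, Y^m) = ∑_{i=1}^m I(X_i; Y_i | X^{i-1}, Y^{i-1})`. -/
noncomputable def instInfo (μ : Measure Ω) {𝒳 𝒴 : Type*} [Fintype 𝒳] [Fintype 𝒴]
    (m : ℕ) (X : ℕ → Ω → 𝒳) (Y : ℕ → Ω → 𝒴) : ℝ :=
  ∑ i ∈ Finset.Icc 1 m, infoMat μ X Y i i

variable {𝒳 𝒴 : Type*} [Fintype 𝒳] [MeasurableSpace 𝒳] [MeasurableSingletonClass 𝒳]
  [Fintype 𝒴] [MeasurableSpace 𝒴] [MeasurableSingletonClass 𝒴]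

theorem ent_equiv (μ : Measure Ω) {α β : Type*} [Fintype α] [Fintype β]
    (W : Ω → α) (V : Ω → β) (e : α ≃ β) (h : ∀ ω, e (W ω) = V ω) :
    entropy μ W = entropy μ V := by
  unfold entropy
  congr 1
  refine Fintype.sum_equiv e _ _ fun w => ?_
  have : W ⁻¹' {w} = V ⁻¹' {e w} := by
    ext ω
    simp [← h]
  rw [this]

theorem snoc_pref {𝒵 : Type*} (X : ℕ → Ω → 𝒵) (n : ℕ) (ω : Ω) :
    Fin.snocEquiv (fun _ : Fin (n + 1) => 𝒵) (X (n + 1) ω, pref X n ω) = pref X (n + 1) ω := by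
  funext t
  refine Fin.lastCases ?_ (fun i => ?_) t <;> simp [Fin.snocEquiv, pref]

theorem ent_snoc (μ : Measure Ω) {𝒵 : Type*} [Fintype 𝒵] (X : ℕ → Ω → 𝒵) (n : ℕ) :
    entropy μ (fun ω => (X (n + 1) ω, pref X n ω)) = entropy μ (pref X (n + 1)) :=
  ent_equiv μ _ _ (Fin.snocEquiv (fun _ : Fin (n + 1) => 𝒵)) (snoc_pref X n)

theorem ent_swap (μ : Measure Ω) {α β : Type*} [Fintype α] [Fintype β]
    (W : Ω → α) (V : Ω → β) :
    entropy μ (fun ω => (W ω, V ω)) = entropy μ (fun ω => (V ω, W ω)) :=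
  ent_equiv μ _ _ (Equiv.prodComm _ _) fun _ => rfl

theorem ent_left (μ : Measure Ω) {𝒵 α : Type*} [Fintype 𝒵] [Fintype α]
    (A : Ω → α) (Y : ℕ → Ω → 𝒵) (n : ℕ) :
    entropy μ (fun ω => ((A ω, Y (n + 1) ω), pref Y n ω))
      = entropy μ (fun ω => (A ω, pref Y (n + 1) ω)) :=
  ent_equiv μ _ _ ((Equiv.prodAssoc _ _ _).trans
    (Equiv.prodCongr (Equiv.refl _) (Fin.snocEquiv (fun _ : Fin (n + 1) => 𝒵))))
    fun ω => Prod.ext rfl (snoc_pref Y n ω)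

theorem ent_i1 (μ : Measure Ω) {𝒵 α : Type*} [Fintype 𝒵] [Fintype α]
    (A : Ω → α) (X : ℕ → Ω → 𝒵) (n : ℕ) :
    entropy μ (fun ω => (X (n + 1) ω, (pref X n ω, A ω)))
      = entropy μ (fun ω => (pref X (n + 1) ω, A ω)) :=
  ent_equiv μ _ _ ((Equiv.prodAssoc _ _ _).symm.trans
    (Equiv.prodCongr (Fin.snocEquiv (fun _ : Fin (n + 1) => 𝒵)) (Equiv.refl _)))
    fun ω => Prod.ext (snoc_pref X n ω) rfl

theorem ent_i2 (μ : Measure Ω) {𝒵 α : Type*} [Fintype 𝒵] [Fintype α]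
    (A : Ω → α) (Y : ℕ → Ω → 𝒵) (n : ℕ) :
    entropy μ (fun ω => (Y (n + 1) ω, (A ω, pref Y n ω)))
      = entropy μ (fun ω => (A ω, pref Y (n + 1) ω)) := by
  rw [← ent_left]
  exact ent_equiv μ _ _ ((Equiv.prodAssoc _ _ _).symm.trans
    (Equiv.prodCongr (Equiv.prodComm _ _) (Equiv.refl _))) fun ω => rfl

theorem ent_i3 (μ : Measure Ω) {𝒵 𝒲 : Type*} [Fintype 𝒵] [Fintype 𝒲]
    (X : ℕ → Ω → 𝒲) (Y : ℕ → Ω → 𝒵) (n : ℕ) :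
    entropy μ (fun ω => ((X (n + 1) ω, Y (n + 1) ω), (pref X n ω, pref Y n ω)))
      = entropy μ (fun ω => (pref X (n + 1) ω, pref Y (n + 1) ω)) :=
  ent_equiv μ _ _ ((Equiv.prodProdProdComm _ _ _ _).trans
    (Equiv.prodCongr (Fin.snocEquiv (fun _ : Fin (n + 1) => 𝒲))
      (Fin.snocEquiv (fun _ : Fin (n + 1) => 𝒵))))
    fun ω => Prod.ext (snoc_pref X n ω) (snoc_pref Y n ω)

theorem ent_zero (μ : Measure Ω) {𝒵 α : Type*} [Fintype 𝒵] [Fintype α]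
    (X : ℕ → Ω → 𝒵) (A : Ω → α) :
    entropy μ (fun ω => (pref X 0 ω, A ω)) = entropy μ A :=
  ent_equiv μ _ _ (Equiv.uniqueProd _ _) fun _ => rfl

theorem cmi_step (μ : Measure Ω) {𝒵 𝒲 : Type*} [Fintype 𝒵] [Fintype 𝒲]
    (X : ℕ → Ω → 𝒲) (Y : ℕ → Ω → 𝒵) (n : ℕ) :
    condMI μ (pref X n) (Y (n + 1)) (pref Y n)
      = entropy μ (fun ω => (pref X n ω, pref Y n ω)) + entropy μ (pref Y (n + 1))
        - entropy μ (pref Y n) - entropy μ (fun ω => (pref X n ω, pref Y (n + 1) ω)) := by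
  unfold condMI condEntropy
  rw [ent_snoc, ent_left]
  ring

theorem ddi_succ (μ : Measure Ω) {𝒵 𝒲 : Type*} [Fintype 𝒵] [Fintype 𝒲]
    (X : ℕ → Ω → 𝒲) (Y : ℕ → Ω → 𝒵) (n : ℕ) :
    delayedDI μ (n + 1) 1 X Y = delayedDI μ n 1 X Y
      + condMI μ (pref X n) (Y (n + 1)) (pref Y n) := by
  rcases Nat.eq_zero_or_pos n with rfl | hn
  · rw [cmi_step, ent_zero, ent_zero]
    simp [delayedDI]
  · unfold delayedDI
    rw [Finset.sum_Icc_succ_top (by omega)]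
    rfl

theorem inst_succ (μ : Measure Ω) {𝒵 𝒲 : Type*} [Fintype 𝒵] [Fintype 𝒲]
    (X : ℕ → Ω → 𝒲) (Y : ℕ → Ω → 𝒵) (n : ℕ) :
    instInfo μ (n + 1) X Y = instInfo μ n X Y
      + (entropy μ (fun ω => (pref X (n + 1) ω, pref Y n ω))
        + entropy μ (fun ω => (pref X n ω, pref Y (n + 1) ω))
        - entropy μ (fun ω => (pref X n ω, pref Y n ω))
        - entropy μ (fun ω => (pref X (n + 1) ω, pref Y (n + 1) ω))) := by
  unfold instInfo
  rw [Finset.sum_Icc_succ_top (by omega)]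
  congr 1
  change condMI μ (X (n + 1)) (Y (n + 1)) (fun ω => (pref X n ω, pref Y n ω)) = _
  unfold condMI condEntropy
  rw [ent_i1, ent_i2, ent_i3]
  ring

theorem ent_pref_zero (μ : Measure Ω) [IsProbabilityMeasure μ] {𝒵 : Type*} [Fintype 𝒵]
    (X : ℕ → Ω → 𝒵) : entropy μ (pref X 0) = 0 := by
  unfold entropy
  have : ∀ w : Fin 0 → 𝒵, pref X 0 ⁻¹' {w} = Set.univ := by
    intro w
    ext ω
    simp [eq_iff_true_of_subsingleton]
  simp [this]

/-- **Amblard–Michel conservation law.**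
`I(X^m; Y^m) = I(D^1 ∘ X^m → Y^m) + I(D^1 ∘ Y^m → X^m) + I_inst(X^m, Y^m)`. -/
theorem amblard_michel_conservation (μ : Measure Ω) [IsProbabilityMeasure μ]
    (m : ℕ) (X : ℕ → Ω → 𝒳) (Y : ℕ → Ω → 𝒴)
    (hX : ∀ i, Measurable (X i)) (hY : ∀ j, Measurable (Y j)) :
    mutualInfo μ (pref X m) (pref Y m)
      = delayedDI μ m 1 X Y + delayedDI μ m 1 Y X + instInfo μ m X Y := by
  clear hX hY
  induction m with
  | zero =>
    unfold mutualInfo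
    rw [ent_zero, ent_pref_zero]
    simp [delayedDI, instInfo]
  | succ n ih =>
    rw [ddi_succ, ddi_succ, inst_succ, cmi_step, cmi_step,
      ent_swap μ (pref Y n) (pref X n), ent_swap μ (pref Y n) (pref X (n + 1))]
    unfold mutualInfo at ih ⊢
    linarith
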